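/- arXiv:1806.06971 — 2 statements merged into one kernel-verified Lean document; each statement's English description precedes it below -/
import Mathlib

section
/- The right-invariant partial order on PPU(b) defined by φ ≤ ψ :⟺ ψφ⁻¹ ∈ PPU(b)⁺ is a lattice order: any two elements of PPU(b) have a least upper bound and a greatest lower bound with respect to this order. -/
open Finsupp

variable (k : Type*) [Field k] (V : Type*) [AddCommGroup V] [Module k V]

/-- Multiplication by `t^n` on `V[t,t⁻¹] := ℤ →₀ V` (writing `v = ∑ᵢ tⁱ vᵢ` as the
finitely supported function `i ↦ vᵢ`). -/
noncomputable def shift (n : ℤ) : (ℤ →₀ V) ≃ₗ[k] (ℤ →₀ V) :=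
  Finsupp.domLCongr (Equiv.addRight n)

/-- The coefficient of `tⁿ` of `b̃(v,w) = ∑ₙ tⁿ (∑ᵢ b(v_{i-n}, w_i))`. -/
noncomputable def Btilde (b : LinearMap.BilinForm k V) (n : ℤ) (v w : ℤ →₀ V) : k :=
  w.sum fun i wi => b (v (i - n)) wi

/-- `φ` is a paraunitary transformation: an invertible `k[t,t⁻¹]`-linear
(i.e. `k`-linear and commuting with multiplication by `t`) endomorphism of
`V[t,t⁻¹]` preserving `b̃`. -/
def IsPU (b : LinearMap.BilinForm k V) (φ : (ℤ →₀ V) ≃ₗ[k] (ℤ →₀ V)) : Prop :=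
  (∀ v, φ (shift k V 1 v) = shift k V 1 (φ v)) ∧
  ∀ (n : ℤ) (v w : ℤ →₀ V), Btilde k V b n (φ v) (φ w) = Btilde k V b n v w

/-- The specialization `t = 1` of a `k[t,t⁻¹]`-linear endomorphism `f = ∑ᵢ tⁱ fᵢ`
of `V[t,t⁻¹]`, i.e. the endomorphism `ε₁(f) = ∑ᵢ fᵢ` of `V`. -/
noncomputable def eps (f : (ℤ →₀ V) →ₗ[k] (ℤ →₀ V)) : V →ₗ[k] V :=
  (Finsupp.lsum k fun _ : ℤ => (LinearMap.id : V →ₗ[k] V)) ∘ₗ f ∘ₗ Finsupp.lsingle 0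

/-- `φ` is pure paraunitary: paraunitary and specializing to the identity at `t = 1`. -/
def IsPPU (b : LinearMap.BilinForm k V) (φ : (ℤ →₀ V) ≃ₗ[k] (ℤ →₀ V)) : Prop :=
  IsPU k V b φ ∧ eps k V (φ : (ℤ →₀ V) →ₗ[k] (ℤ →₀ V)) = LinearMap.id

/-- `φ ∈ PPU(b)⁻`: pure paraunitary and all Laurent coefficients `φᵢ` for `i > 0` vanish. -/
def PPUneg (b : LinearMap.BilinForm k V) (φ : (ℤ →₀ V) ≃ₗ[k] (ℤ →₀ V)) : Prop :=
  IsPPU k V b φ ∧ ∀ (x : V) (i : ℤ), 0 < i → φ (Finsupp.single 0 x) i = 0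

/-- `φ ∈ PPU(b)⁺`: pure paraunitary and all Laurent coefficients `φᵢ` for `i < 0` vanish. -/
def PPUpos (b : LinearMap.BilinForm k V) (φ : (ℤ →₀ V) ≃ₗ[k] (ℤ →₀ V)) : Prop :=
  IsPPU k V b φ ∧ ∀ (x : V) (i : ℤ), i < 0 → φ (Finsupp.single 0 x) i = 0

section Helpers
variable {k V}

theorem shift_apply' (n : ℤ) (v : ℤ →₀ V) (i : ℤ) : shift k V n v i = v (i - n) := by
  simp [shift, Finsupp.domLCongr_apply, Finsupp.domCongr_apply, sub_eq_add_neg]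

theorem shift_shift' (m n : ℤ) (v : ℤ →₀ V) :
    shift k V m (shift k V n v) = shift k V (m + n) v := by
  ext i; simp only [shift_apply']; congr 1; ring

theorem shift_zero' (v : ℤ →₀ V) : shift k V 0 v = v := by
  ext i; simp [shift_apply']

theorem shift_single' (m n : ℤ) (x : V) :
    shift k V m (single n x) = single (m + n) x := by
  classical
  ext i; simp only [shift_apply', Finsupp.single_apply]
  congr 1; apply propext; constructor <;> intro h <;> lia

theorem Btilde_eq_sum (b : LinearMap.BilinForm k V) (n : ℤ) (v w : ℤ →₀ V) (S : Finset ℤ)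
    (hS : w.support ⊆ S) : Btilde k V b n v w = ∑ i ∈ S, b (v (i - n)) (w i) := by
  unfold Btilde
  exact Finsupp.sum_of_support_subset _ hS _ (by simp)

/-- The constant coefficient form. -/
noncomputable def B0 (b : LinearMap.BilinForm k V) : LinearMap.BilinForm k (ℤ →₀ V) :=
  LinearMap.mk₂ k (fun v w => Btilde k V b 0 v w)
    (by intro v v' w; simp [Btilde, Finsupp.sum_add])
    (by intro c v w; simp [Btilde, Finsupp.sum, Finset.mul_sum])
    (by
      classical
      intro v w w'
      rw [Btilde_eq_sum b 0 v (w + w') (w.support ∪ w'.support) Finsupp.support_add,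
        Btilde_eq_sum b 0 v w (w.support ∪ w'.support) Finset.subset_union_left,
        Btilde_eq_sum b 0 v w' (w.support ∪ w'.support) Finset.subset_union_right,
        ← Finset.sum_add_distrib]
      simp)
    (by
      classical
      intro c v w
      rw [Btilde_eq_sum b 0 v (c • w) w.support Finsupp.support_smul,
        Btilde_eq_sum b 0 v w w.support subset_rfl, smul_eq_mul, Finset.mul_sum]
      simp)

variable (b : LinearMap.BilinForm k V)

theorem Btilde_eq (n : ℤ) (v w : ℤ →₀ V) :
    Btilde k V b n v w = B0 b (shift k V n v) w := by
  simp [B0, Btilde, shift_apply']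

theorem B0_eq_sum (v w : ℤ →₀ V) (S : Finset ℤ)
    (hS : w.support ⊆ S) : B0 b v w = ∑ i ∈ S, b (v i) (w i) := by
  have := Btilde_eq_sum b 0 v w S hS
  simpa [B0] using this

theorem B0_zero_of (v w : ℤ →₀ V) (h : ∀ i, v i = 0 ∨ w i = 0) : B0 b v w = 0 := by
  rw [B0_eq_sum b v w _ subset_rfl]
  apply Finset.sum_eq_zero
  intro i _
  rcases h i with h | h <;> simp [h]

theorem B0_single (v : ℤ →₀ V) (i : ℤ) (x : V) : B0 b v (single i x) = b (v i) x := by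
  rw [B0_eq_sum b _ _ {i} Finsupp.support_single_subset]; simp

theorem B0_symm (hsymm : ∀ v w : V, b v w = b w v) (v w : ℤ →₀ V) : B0 b v w = B0 b w v := by
  classical
  rw [B0_eq_sum b v w (v.support ∪ w.support) Finset.subset_union_right,
    B0_eq_sum b w v (v.support ∪ w.support) Finset.subset_union_left]
  simp [hsymm]

theorem B0_shift (n : ℤ) (v w : ℤ →₀ V) :
    B0 b (shift k V n v) (shift k V n w) = B0 b v w := by
  classical
  rw [B0_eq_sum b _ (shift k V n w) (w.support.image (· + n)), B0_eq_sum b v w _ subset_rfl,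
    Finset.sum_image]
  · simp [shift_apply']
  · intro x _ y _ h; simpa using h
  · intro i hi
    simp only [Finsupp.mem_support_iff, shift_apply'] at hi
    simp only [Finset.mem_image, Finsupp.mem_support_iff]
    exact ⟨i - n, hi, by ring⟩

theorem B0_shift_left (n : ℤ) (v w : ℤ →₀ V) :
    B0 b (shift k V n v) w = B0 b v (shift k V (-n) w) := by
  rw [← B0_shift b (-n), shift_shift']; simp [shift_zero']

/-- Evaluation at `t = 1`. -/
noncomputable def ev : (ℤ →₀ V) →ₗ[k] V :=
  Finsupp.lsum k fun _ : ℤ => (LinearMap.id : V →ₗ[k] V)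

theorem ev_eq_sum (v : ℤ →₀ V) (S : Finset ℤ) (hS : v.support ⊆ S) :
    ev (k := k) v = ∑ i ∈ S, v i := by
  simp only [ev, Finsupp.coe_lsum, LinearMap.id_coe]
  exact Finsupp.sum_of_support_subset _ hS _ (by simp)

theorem ev_single (i : ℤ) (x : V) : ev (k := k) (single i x) = x := by
  simp [ev]

theorem ev_shift (n : ℤ) (v : ℤ →₀ V) : ev (k := k) (shift k V n v) = ev (k := k) v := by
  suffices h : (ev (k := k) (V := V)) ∘ₗ (shift k V n).toLinearMap = ev by
    exact LinearMap.congr_fun h v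
  ext i x
  simp [shift_single', ev_single]

theorem ev_form (v w : ℤ →₀ V) : ∃ S : Finset ℤ, 0 ∈ S ∧
    b (ev (k := k) v) (ev (k := k) w) = ∑ n ∈ S, Btilde k V b n v w := by
  classical
  refine ⟨insert 0 ((w.support ×ˢ v.support).image (fun p => p.1 - p.2)), by simp, ?_⟩
  set S := insert 0 ((w.support ×ˢ v.support).image (fun p => p.1 - p.2)) with hSdef
  simp_rw [Btilde_eq_sum b _ v w w.support subset_rfl]
  rw [Finset.sum_comm, ev_eq_sum w _ subset_rfl, map_sum]
  refine Finset.sum_congr rfl fun i hi => ?_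
  rw [ev_eq_sum v (S.image (fun n => i - n)), Finset.sum_image]
  · simp
  · intro x _ y _ h; simpa using h
  · intro j hj
    rw [Finset.mem_image]
    refine ⟨i - j, ?_, by ring⟩
    rw [hSdef]
    apply Finset.mem_insert_of_mem
    rw [Finset.mem_image]
    exact ⟨(i, j), Finset.mem_product.2 ⟨hi, hj⟩, rfl⟩

theorem aniso_aux (haniso : ∀ v : V, b v v = 0 → v = 0) (a : ℤ) (m : ℕ) :
    ∀ v : ℤ →₀ V, (∀ i, v i ≠ 0 → a ≤ i ∧ i < a + m) →
      (∀ n, B0 b (shift k V n v) v = 0) → v = 0 := by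
  induction m with
  | zero =>
    intro v hv _
    ext i
    by_contra h
    have := hv i h
    simp at this; lia
  | succ m ih =>
    intro v hv hB
    have hev : ev (k := k) v = 0 := by
      apply haniso
      obtain ⟨S, -, hS⟩ := ev_form b v v
      rw [hS]
      exact Finset.sum_eq_zero fun n _ => by rw [Btilde_eq, hB]
    have hsum : ∀ i, a + m ≤ i → ∑ j ∈ Finset.Ico a (i + 1), v j = 0 := by
      intro i hi
      rw [← ev_eq_sum (k := k) v, hev]
      intro j hj
      have := hv j (by simpa using hj)
      simp only [Finset.mem_Ico]
      push_cast at this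
      lia
    let y : ℤ →₀ V := Finsupp.onFinset (Finset.Ico a (a + m))
      (fun i => - ∑ j ∈ Finset.Ico a (i + 1), v j) (by
        intro i hi
        rw [Finset.mem_Ico]
        by_contra hc
        apply hi
        rw [neg_eq_zero]
        by_cases h1 : i < a
        · rw [Finset.Ico_eq_empty (by lia)]; simp
        · exact hsum i (by lia))
    have hy : ∀ i, y i = - ∑ j ∈ Finset.Ico a (i + 1), v j := fun i => rfl
    have hvy : v = shift k V 1 y - y := by
      ext i
      rw [Finsupp.sub_apply, shift_apply', hy, hy]
      by_cases h1 : a ≤ i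
      · have hI : Finset.Ico a (i + 1) = insert i (Finset.Ico a i) := by
          ext j; simp only [Finset.mem_Ico, Finset.mem_insert]; lia
        rw [sub_add_cancel, hI, Finset.sum_insert (by simp)]
        abel
      · rw [Finset.Ico_eq_empty (by lia), Finset.Ico_eq_empty (by lia)]
        by_contra hc
        exact h1 (hv i (by simpa using hc)).1
    have hys : ∀ i, y i ≠ 0 → a ≤ i ∧ i < a + m := by
      intro i hi
      have : i ∈ y.support := by simpa using hi
      have := Finsupp.support_onFinset_subset this
      simpa using this
    let c : ℤ → k := fun n => B0 b (shift k V n y) y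
    have hrec : ∀ n, c (n + 1) = 2 * c n - c (n - 1) := by
      intro n
      have h := hB n
      rw [hvy] at h
      simp only [map_sub, LinearMap.sub_apply, shift_shift'] at h
      rw [B0_shift_left b _ y (shift k V 1 y), B0_shift_left b _ y (shift k V 1 y),
        shift_shift', shift_shift'] at h
      simp only [c]
      rw [B0_shift_left, B0_shift_left b n, B0_shift_left b (n - 1)]
      rw [B0_shift_left, B0_shift_left b n] at h
      have e1 : -(n + 1) + 1 = -n := by ring
      have e2 : -n + 1 = -(n - 1) := by ring
      rw [e1, e2] at h
      linear_combination -h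
    have hlow : ∀ n, n ≤ -(m : ℤ) → c n = 0 := by
      intro n hn
      apply B0_zero_of
      intro i
      rw [shift_apply']
      by_contra! hc
      have h1 := hys _ hc.1
      have h2 := hys _ hc.2
      lia
    have hc : ∀ j : ℕ, c (-(m : ℤ) + j - 1) = 0 ∧ c (-(m : ℤ) + j) = 0 := by
      intro j
      induction j with
      | zero => exact ⟨hlow _ (by simp), hlow _ (by simp)⟩
      | succ j ihj =>
        have e : -(m : ℤ) + (j + 1 : ℕ) - 1 = -(m : ℤ) + j := by push_cast; ring
        have e' : -(m : ℤ) + (j + 1 : ℕ) = (-(m : ℤ) + j) + 1 := by push_cast; ring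
        rw [e, e', hrec, ihj.1, ihj.2]
        simp
    have hyz : y = 0 := by
      apply ih y hys
      intro n
      change c n = 0
      by_cases hn : n ≤ -(m : ℤ)
      · exact hlow n hn
      · have := (hc (n + m).toNat).2
        rwa [Int.toNat_of_nonneg (by lia), show -(m : ℤ) + (n + m) = n by ring] at this
    rw [hvy, hyz]; simp

theorem aniso (haniso : ∀ v : V, b v v = 0 → v = 0) (v : ℤ →₀ V)
    (hB : ∀ n, B0 b (shift k V n v) v = 0) : v = 0 := by
  obtain ⟨A, hA⟩ := v.support.bddAbove
  obtain ⟨a, ha⟩ := v.support.bddBelow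
  refine aniso_aux b haniso a (A + 1 - a).toNat v ?_ hB
  intro i hi
  have h1 : i ≤ A := hA (by simpa using hi)
  have h2 : a ≤ i := ha (by simpa using hi)
  rw [Int.toNat_of_nonneg (by lia)]
  lia

theorem aniso' (hsymm : ∀ v w : V, b v w = b w v)
    (haniso : ∀ v : V, b v v = 0 → v = 0) (v : ℤ →₀ V)
    (hB : ∀ n : ℤ, 0 ≤ n → B0 b (shift k V n v) v = 0) : v = 0 := by
  apply aniso b haniso
  intro n
  rcases le_total 0 n with h | h
  · exact hB n h
  · rw [B0_shift_left, B0_symm b hsymm]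
    exact hB _ (by lia)

/-- `t^n V[t]`. -/
def PP (n : ℤ) : Submodule k (ℤ →₀ V) where
  carrier := {v | ∀ i, i < n → v i = 0}
  add_mem' := by
    intro v w hv hw i hi
    simp [hv i hi, hw i hi]
  zero_mem' := by intro i _; rfl
  smul_mem' := by
    intro c v hv i hi
    simp [hv i hi]

theorem mem_PP (n : ℤ) (v : ℤ →₀ V) : v ∈ PP (k := k) n ↔ ∀ i, i < n → v i = 0 := Iff.rfl

theorem shift_mem_PP (m n : ℤ) (v : ℤ →₀ V) (hv : v ∈ PP (k := k) n) :
    shift k V m v ∈ PP (k := k) (m + n) := by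
  intro i hi
  rw [shift_apply']
  exact hv _ (by lia)

/-- `k[t]`-lattices. -/
structure IsLat (M : Submodule k (ℤ →₀ V)) : Prop where
  stable : ∀ v ∈ M, shift k V 1 v ∈ M
  lower : ∃ n, PP n ≤ M
  upper : ∃ n, M ≤ PP n

theorem IsLat.stable' {M : Submodule k (ℤ →₀ V)} (hM : IsLat M) (n : ℕ) (v : ℤ →₀ V)
    (hv : v ∈ M) : shift k V n v ∈ M := by
  induction n with
  | zero => simpa [shift_zero'] using hv
  | succ n ih =>
    have := hM.stable _ ih
    rwa [shift_shift', add_comm] at this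

theorem PP_anti {m n : ℤ} (h : m ≤ n) : PP (k := k) (V := V) n ≤ PP m := by
  intro v hv i hi
  exact hv i (by lia)

theorem IsLat.inf {M N : Submodule k (ℤ →₀ V)} (hM : IsLat M) (hN : IsLat N) :
    IsLat (M ⊓ N) := by
  obtain ⟨m, hm⟩ := hM.lower
  obtain ⟨n, hn⟩ := hN.lower
  obtain ⟨m', hm'⟩ := hM.upper
  refine ⟨fun v hv => ⟨hM.stable v hv.1, hN.stable v hv.2⟩, ⟨max m n, ?_⟩, ⟨m', ?_⟩⟩
  · exact le_inf ((PP_anti (le_max_left _ _)).trans hm) ((PP_anti (le_max_right _ _)).trans hn)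
  · exact inf_le_left.trans hm'

theorem IsLat.sup {M N : Submodule k (ℤ →₀ V)} (hM : IsLat M) (hN : IsLat N) :
    IsLat (M ⊔ N) := by
  obtain ⟨m, hm⟩ := hM.lower
  obtain ⟨n', hn'⟩ := hN.upper
  obtain ⟨m', hm'⟩ := hM.upper
  refine ⟨?_, ⟨m, hm.trans le_sup_left⟩, ⟨min m' n', ?_⟩⟩
  · intro v hv
    obtain ⟨x, hx, y, hy, rfl⟩ := Submodule.mem_sup.1 hv
    rw [map_add]
    exact Submodule.add_mem_sup (hM.stable x hx) (hN.stable y hy)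
  · exact sup_le (hm'.trans (PP_anti (min_le_left _ _))) (hn'.trans (PP_anti (min_le_right _ _)))

theorem orth_decomp [FiniteDimensional k V] (hsymm : ∀ v w : V, b v w = b w v)
    (haniso : ∀ v : V, b v v = 0 → v = 0) {N : Submodule k (ℤ →₀ V)} (hN : IsLat N)
    (x : ℤ →₀ V) : ∃ f ∈ N, ∀ y ∈ N, B0 b (x - f) y = 0 := by
  classical
  obtain ⟨n, hn⟩ := hN.lower
  obtain ⟨m, hm⟩ := hN.upper
  let U : Submodule k (ℤ →₀ V) := Finsupp.supported V k (Set.Ico m n)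
  have : FiniteDimensional k U :=
    Module.Finite.equiv (Finsupp.supportedEquivFinsupp (M := V) (R := k) (Set.Ico m n)).symm
  have hU : ∀ u ∈ U, ∀ i, n ≤ i → u i = 0 := by
    intro u hu i hi
    by_contra hc
    have : i ∈ Set.Ico m n := hu (by simpa using hc)
    simp at this; lia
  let F : Submodule k (ℤ →₀ V) := N ⊓ U
  have : FiniteDimensional k F := Submodule.finiteDimensional_inf_right N U
  -- high part
  let hi : (ℤ →₀ V) → (ℤ →₀ V) := fun v => v.filter (fun i => n ≤ i)
  have hiPP : ∀ v, hi v ∈ PP (k := k) n := by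
    intro v i h
    exact Finsupp.filter_apply_neg _ _ (by lia)
  have hlow : ∀ v i, n ≤ i → (v - hi v) i = 0 := by
    intro v i h
    rw [Finsupp.sub_apply, Finsupp.filter_apply_pos _ _ h, sub_self]
  have orthPP : ∀ u w : ℤ →₀ V, (∀ i, n ≤ i → u i = 0) → w ∈ PP (k := k) n → B0 b u w = 0 := by
    intro u w hu hw
    apply B0_zero_of
    intro i
    rcases le_or_gt n i with h | h
    · exact Or.inl (hu i h)
    · exact Or.inr (hw i h)
  have hdec : ∀ y ∈ N, y - hi y ∈ F := by
    intro y hy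
    refine ⟨N.sub_mem hy (hn (hiPP y)), ?_⟩
    intro i hc
    rw [Set.mem_Ico]
    by_contra hh
    have : (y - hi y) i ≠ 0 := by simpa using hc
    apply this
    rcases le_or_gt n i with h | h
    · exact hlow y i h
    · exact (PP (k := k) m).sub_mem (hm hy) (hm (hn (hiPP y))) i (by lia)
  let D : F →ₗ[k] Module.Dual k F := (B0 b).domRestrict₁₂ F F
  have hD : ∀ u v : F, D u v = B0 b u v := fun u v => rfl
  have hinj : Function.Injective D := by
    rw [injective_iff_map_eq_zero]
    intro u hu
    have huN : ∀ y ∈ N, B0 b u y = 0 := by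
      intro y hy
      have h1 : D u ⟨y - hi y, hdec y hy⟩ = 0 := by rw [hu]; rfl
      rw [hD] at h1
      have h2 := orthPP u (hi y) (hU _ u.2.2) (hiPP y)
      simp only [map_sub, h2, sub_zero] at h1
      exact h1
    apply Subtype.ext
    apply aniso' b hsymm haniso
    intro j hj
    rw [B0_symm b hsymm]
    apply huN
    have := hN.stable' j.toNat _ u.2.1
    rwa [Int.toNat_of_nonneg hj] at this
  have hsurj : Function.Surjective D :=
    (LinearMap.injective_iff_surjective_of_finrank_eq_finrank
      (Subspace.dual_finrank_eq).symm).1 hinj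
  obtain ⟨f0, hf0⟩ := hsurj ((B0 b x) ∘ₗ F.subtype)
  refine ⟨f0 + hi (x - f0), N.add_mem f0.2.1 (hn (hiPP _)), ?_⟩
  intro y hy
  have e : x - (f0 + hi (x - f0)) = (x - f0) - hi (x - f0) := by abel
  have h1 : B0 b ((x - f0) - hi (x - f0)) (hi y) = 0 := orthPP _ _ (hlow _) (hiPP y)
  have h2 : B0 b (hi (x - f0)) (y - hi y) = 0 := by
    rw [B0_symm b hsymm]
    exact orthPP _ _ (hlow _) (hiPP _)
  have h3 : B0 b (x - f0) (y - hi y) = 0 := by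
    have := LinearMap.congr_fun hf0 ⟨y - hi y, hdec y hy⟩
    rw [hD] at this
    rw [map_sub (B0 b), LinearMap.sub_apply, sub_eq_zero]
    exact this.symm
  rw [e, ← sub_add_cancel y (hi y), map_add, h1, map_sub (B0 b), LinearMap.sub_apply, h2, h3]
  simp

theorem IsLat.shifted {M : Submodule k (ℤ →₀ V)} (hM : IsLat M) :
    IsLat (M.map (shift k V 1).toLinearMap) := by
  obtain ⟨m, hm⟩ := hM.lower
  obtain ⟨n, hn⟩ := hM.upper
  refine ⟨?_, ⟨1 + m, ?_⟩, ⟨1 + n, ?_⟩⟩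
  · rintro _ ⟨v, hv, rfl⟩
    exact ⟨_, hM.stable v hv, rfl⟩
  · intro v hv
    refine ⟨shift k V (-1) v, hm ?_, ?_⟩
    · have := shift_mem_PP (-1) _ v hv
      rwa [show -1 + (1 + m) = m by ring] at this
    · simp [shift_shift', shift_zero']
  · rintro _ ⟨v, hv, rfl⟩
    exact shift_mem_PP _ _ _ (hn hv)

/-- The orthogonal complement of `tM` in `M`. -/
noncomputable def WW (M : Submodule k (ℤ →₀ V)) : Submodule k (ℤ →₀ V) where
  carrier := {w | w ∈ M ∧ ∀ y ∈ M, B0 b w (shift k V 1 y) = 0}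
  add_mem' := by
    rintro v w ⟨h1, h2⟩ ⟨h3, h4⟩
    exact ⟨M.add_mem h1 h3, fun y hy => by simp [h2 y hy, h4 y hy]⟩
  zero_mem' := ⟨M.zero_mem, by simp⟩
  smul_mem' := by
    rintro c v ⟨h1, h2⟩
    exact ⟨M.smul_mem c h1, fun y hy => by simp [h2 y hy]⟩

variable {b}

theorem WW_orth (hsymm : ∀ v w : V, b v w = b w v) {M : Submodule k (ℤ →₀ V)} (hM : IsLat M)
    {v w : ℤ →₀ V} (hv : v ∈ WW b M) (hw : w ∈ WW b M) (n : ℤ) (hn : n ≠ 0) :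
    B0 b (shift k V n v) w = 0 := by
  have key : ∀ (v w : ℤ →₀ V), v ∈ WW b M → w ∈ M → ∀ n : ℤ, 0 < n →
      B0 b v (shift k V n w) = 0 := by
    intro v w hv hw n hn
    have := hv.2 _ (hM.stable' (n - 1).toNat w hw)
    rwa [shift_shift', Int.toNat_of_nonneg (by lia), show 1 + (n - 1) = n by ring] at this
  rcases lt_or_gt_of_ne hn with h | h
  · rw [B0_shift_left]
    exact key _ _ hv hw.1 _ (by lia)
  · rw [B0_symm b hsymm]
    exact key _ _ hw hv.1 _ h

theorem WW_aniso (hsymm : ∀ v w : V, b v w = b w v)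
    (haniso : ∀ v : V, b v v = 0 → v = 0) {M : Submodule k (ℤ →₀ V)} (hM : IsLat M)
    {w : ℤ →₀ V} (hw : w ∈ WW b M) (h0 : B0 b w w = 0) : w = 0 := by
  apply aniso b haniso
  intro n
  by_cases hn : n = 0
  · rw [hn, shift_zero', h0]
  · exact WW_orth hsymm hM hw hw n hn

theorem WW_form (hsymm : ∀ v w : V, b v w = b w v) {M : Submodule k (ℤ →₀ V)} (hM : IsLat M)
    {v w : ℤ →₀ V} (hv : v ∈ WW b M) (hw : w ∈ WW b M) :
    B0 b v w = b (ev (k := k) v) (ev (k := k) w) := by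
  obtain ⟨S, h0, hS⟩ := ev_form b v w
  rw [hS, Finset.sum_eq_single_of_mem 0 h0, Btilde_eq, shift_zero']
  intro n _ hn
  rw [Btilde_eq, WW_orth hsymm hM hv hw n hn]

theorem WW_span [FiniteDimensional k V] (hsymm : ∀ v w : V, b v w = b w v)
    (haniso : ∀ v : V, b v v = 0 → v = 0) {M : Submodule k (ℤ →₀ V)} (hM : IsLat M)
    (m : ℤ →₀ V) (hm : m ∈ M) : ∃ (D : ℕ) (w : ℕ → (ℤ →₀ V)), (∀ i, w i ∈ WW b M) ∧
      m = ∑ i ∈ Finset.range D, shift k V i (w i) := by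
  have hdec : ∀ x : M, ∃ r : M, (x : ℤ →₀ V) - shift k V 1 r ∈ WW b M := by
    intro x
    obtain ⟨_, ⟨r, hr, rfl⟩, h⟩ := orth_decomp b hsymm haniso hM.shifted (x : ℤ →₀ V)
    refine ⟨⟨r, hr⟩, M.sub_mem x.2 (hM.stable _ hr), ?_⟩
    intro y hy
    exact h _ ⟨y, hy, rfl⟩
  choose r hr using hdec
  let R : ℕ → M := fun i => r^[i] ⟨m, hm⟩
  have hR : ∀ i, R (i + 1) = r (R i) := fun i => Function.iterate_succ_apply' _ _ _
  let w : ℕ → (ℤ →₀ V) := fun i => (R i : ℤ →₀ V) - shift k V 1 (R (i + 1))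
  have hw : ∀ i, w i ∈ WW b M := by
    intro i
    simp only [w, hR]
    exact hr _
  have hexp : ∀ N : ℕ, m = ∑ i ∈ Finset.range N, shift k V i (w i) + shift k V N (R N) := by
    intro N
    induction N with
    | zero => simp [shift_zero', R]
    | succ N ih =>
      rw [Finset.sum_range_succ, add_assoc]
      have : shift k V N (w N) + shift k V (N + 1 : ℕ) (R (N + 1)) = shift k V N (R N) := by
        simp only [w, map_sub, shift_shift']
        push_cast
        abel
      rw [this]
      exact ih
  obtain ⟨n, hn⟩ := hM.upper
  obtain ⟨A, hA⟩ := m.support.bddAbove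
  have hwz : ∀ i : ℕ, A < i + n → w i = 0 := by
    intro i hi
    apply WW_aniso hsymm haniso hM (hw i)
    have h1 : B0 b m (shift k V i (w i)) = 0 := by
      apply B0_zero_of
      intro j
      by_cases hj : j ≤ A
      · right
        exact shift_mem_PP i n (w i) (hn (hw i).1) j (by lia)
      · left
        by_contra hc
        exact hj (hA (by simpa using hc))
    rw [hexp (i + 1), Finset.sum_range_succ, map_add, map_add, LinearMap.add_apply,
      LinearMap.add_apply, B0_shift, map_sum, LinearMap.sum_apply, Finset.sum_eq_zero] at h1
    · have h2 : B0 b (shift k V (i + 1 : ℕ) (R (i + 1))) (shift k V i (w i)) = 0 := by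
        rw [B0_symm b hsymm, B0_shift_left, shift_shift',
          show -(i : ℤ) + (i + 1 : ℕ) = 1 by push_cast; ring]
        exact (hw i).2 _ (R (i + 1)).2
      rw [h2] at h1
      simpa using h1
    · intro j hj
      rw [B0_symm b hsymm, B0_shift_left, shift_shift', B0_symm b hsymm]
      apply WW_orth hsymm hM (hw j) (hw i)
      have := Finset.mem_range.1 hj
      lia
  let D := (A - n + 1).toNat
  have hD : A < D + n := by simp only [D]; lia
  refine ⟨D, w, hw, ?_⟩
  have hRD : ∀ j : ℕ, (R D : ℤ →₀ V) = shift k V j (R (D + j)) := by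
    intro j
    induction j with
    | zero => simp [shift_zero']
    | succ j ih =>
      have h1 := hwz (D + j) (by push_cast; lia)
      simp only [w, sub_eq_zero] at h1
      rw [ih, h1, shift_shift']
      push_cast
      rfl
  have hRz : (R D : ℤ →₀ V) = 0 := by
    ext i
    have h1 := shift_mem_PP ((i - n + 1).toNat : ℤ) n _ (hn (R (D + (i - n + 1).toNat)).2)
    rw [← hRD] at h1
    exact h1 i (by lia)
  have := hexp D
  rwa [hRz, map_zero, add_zero] at this

theorem PP_le_of_single (m : ℤ) (M : Submodule k (ℤ →₀ V))
    (h : ∀ (i : ℤ) (x : V), m ≤ i → single i x ∈ M) : PP m ≤ M := by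
  intro v hv
  rw [← Finsupp.sum_single v]
  apply Submodule.sum_mem
  intro i hi
  apply h
  by_contra hc
  exact (Finsupp.mem_support_iff.1 hi) (hv i (by lia))

theorem comm_all (f : (ℤ →₀ V) →ₗ[k] (ℤ →₀ V))
    (hf : ∀ v, f (shift k V 1 v) = shift k V 1 (f v)) (n : ℤ) (v : ℤ →₀ V) :
    f (shift k V n v) = shift k V n (f v) := by
  induction n using Int.induction_on generalizing v with
  | zero => simp [shift_zero']
  | succ n ih => rw [← shift_shift', ih, hf, shift_shift']
  | pred n ih =>
    have h := hf (shift k V (-(n : ℤ) - 1) v)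
    rw [shift_shift', show 1 + (-(n : ℤ) - 1) = -n by ring, ih] at h
    rw [show -(n : ℤ) - 1 = -1 + -n by ring, ← shift_shift' (-1) _ (f v), h,
      shift_shift', show -1 + -(n : ℤ) = -n - 1 by ring]
    simp [shift_zero']

theorem isPPU_iff (φ : (ℤ →₀ V) ≃ₗ[k] (ℤ →₀ V)) : IsPPU k V b φ ↔
    (∀ n v, φ (shift k V n v) = shift k V n (φ v)) ∧
    (∀ v w, B0 b (φ v) (φ w) = B0 b v w) ∧ ∀ v, ev (k := k) (φ v) = ev (k := k) v := by
  constructor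
  · rintro ⟨⟨h1, h2⟩, h3⟩
    have hc := comm_all φ.toLinearMap h1
    refine ⟨hc, ?_, ?_⟩
    · intro v w
      have := h2 0 v w
      simpa only [Btilde_eq, shift_zero'] using this
    · intro v
      suffices h : (ev (k := k) (V := V)) ∘ₗ φ.toLinearMap = ev by
        exact LinearMap.congr_fun h v
      ext i x
      have e := hc i (single 0 x)
      rw [shift_single', add_zero] at e
      have h4 : ev (k := k) (φ (single 0 x)) = x := LinearMap.congr_fun h3 x
      simp only [LinearMap.coe_comp, Function.comp_apply, Finsupp.lsingle_apply, e, ev_shift,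
        ev_single]
      exact h4
  · rintro ⟨h1, h2, h3⟩
    refine ⟨⟨h1 1, ?_⟩, ?_⟩
    · intro n v w
      rw [Btilde_eq, Btilde_eq, ← h1, h2]
    · ext x
      have := h3 (single 0 x)
      rw [ev_single] at this
      exact this

theorem IsPPU_mul {φ ψ : (ℤ →₀ V) ≃ₗ[k] (ℤ →₀ V)} (hφ : IsPPU k V b φ) (hψ : IsPPU k V b ψ) :
    IsPPU k V b (φ * ψ) := by
  rw [isPPU_iff] at *
  refine ⟨?_, ?_, ?_⟩
  · intro n v
    simp only [LinearEquiv.mul_apply, hψ.1, hφ.1]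
  · intro v w
    simp only [LinearEquiv.mul_apply, hψ.2.1, hφ.2.1]
  · intro v
    simp only [LinearEquiv.mul_apply, hψ.2.2, hφ.2.2]

theorem self_inv (φ : (ℤ →₀ V) ≃ₗ[k] (ℤ →₀ V)) (v : ℤ →₀ V) : φ (φ⁻¹ v) = v :=
  φ.apply_symm_apply v

theorem inv_self (φ : (ℤ →₀ V) ≃ₗ[k] (ℤ →₀ V)) (v : ℤ →₀ V) : φ⁻¹ (φ v) = v :=
  φ.symm_apply_apply v

theorem IsPPU_inv {φ : (ℤ →₀ V) ≃ₗ[k] (ℤ →₀ V)} (hφ : IsPPU k V b φ) :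
    IsPPU k V b φ⁻¹ := by
  rw [isPPU_iff] at *
  refine ⟨?_, ?_, ?_⟩
  · intro n v
    apply φ.injective
    rw [hφ.1, self_inv, self_inv]
  · intro v w
    rw [← hφ.2.1, self_inv, self_inv]
  · intro v
    rw [← hφ.2.2, self_inv]

theorem map_PP_le {φ : (ℤ →₀ V) ≃ₗ[k] (ℤ →₀ V)} (hφ : IsPPU k V b φ) (n : ℤ)
    (h : ∀ x, φ (single 0 x) ∈ PP (k := k) n) (v : ℤ →₀ V) (hv : v ∈ PP (k := k) 0) :
    φ v ∈ PP (k := k) n := by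
  have hc := ((isPPU_iff φ).1 hφ).1
  have : PP 0 ≤ (PP (k := k) n).comap φ.toLinearMap := by
    apply PP_le_of_single
    intro i x hi
    have e := hc i (single 0 x)
    rw [shift_single', add_zero] at e
    change φ (single i x) ∈ PP (k := k) n
    rw [e]
    exact PP_anti (by lia) (shift_mem_PP i n _ (h x))
  exact this hv

theorem PPUpos_iff (φ : (ℤ →₀ V) ≃ₗ[k] (ℤ →₀ V)) : PPUpos k V b φ ↔
    IsPPU k V b φ ∧ ∀ v ∈ PP (k := k) 0, φ v ∈ PP (k := k) 0 := by
  constructor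
  · rintro ⟨h1, h2⟩
    exact ⟨h1, map_PP_le h1 0 h2⟩
  · rintro ⟨h1, h2⟩
    refine ⟨h1, fun x => h2 _ ?_⟩
    intro i hi
    exact Finsupp.single_eq_of_ne (by lia)

theorem PPUpos_mul_inv_iff {φ ψ : (ℤ →₀ V) ≃ₗ[k] (ℤ →₀ V)} (hφ : IsPPU k V b φ)
    (hψ : IsPPU k V b ψ) : PPUpos k V b (ψ * φ⁻¹) ↔
    (PP (k := k) 0).comap φ.toLinearMap ≤ (PP (k := k) 0).comap ψ.toLinearMap := by
  rw [PPUpos_iff]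
  constructor
  · rintro ⟨-, h⟩ v hv
    have := h _ hv
    rw [LinearEquiv.mul_apply] at this
    change ψ (φ⁻¹ (φ v)) ∈ PP (k := k) 0 at this
    rwa [inv_self] at this
  · intro h
    refine ⟨IsPPU_mul hψ (IsPPU_inv hφ), ?_⟩
    intro v hv
    apply h
    change φ (φ⁻¹ v) ∈ PP (k := k) 0
    rwa [self_inv]

theorem bounded_below [FiniteDimensional k V] {φ : (ℤ →₀ V) ≃ₗ[k] (ℤ →₀ V)}
    (hφ : IsPPU k V b φ) : ∃ n : ℤ, ∀ v ∈ PP (k := k) 0, φ v ∈ PP (k := k) n := by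
  have hex : ∀ v : ℤ →₀ V, ∃ n, v ∈ PP (k := k) n := by
    intro v
    obtain ⟨a, ha⟩ := v.support.bddBelow
    refine ⟨a, fun i hi => ?_⟩
    by_contra hc
    have : a ≤ i := ha (by simpa using hc)
    lia
  choose N hN using hex
  let e := Module.finBasis k V
  obtain ⟨n, hn⟩ := (Set.finite_range fun i => N (φ (single 0 (e i)))).bddBelow
  refine ⟨n, map_PP_le hφ n ?_⟩
  have : (⊤ : Submodule k V) ≤
      (PP (k := k) n).comap (φ.toLinearMap ∘ₗ Finsupp.lsingle 0) := by
    rw [← e.span_eq, Submodule.span_le]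
    rintro _ ⟨i, rfl⟩
    exact PP_anti (hn ⟨i, rfl⟩) (hN (φ (single 0 (e i))))
  intro x
  exact this (Submodule.mem_top (x := x))

theorem isLat_comap [FiniteDimensional k V] {φ : (ℤ →₀ V) ≃ₗ[k] (ℤ →₀ V)}
    (hφ : IsPPU k V b φ) : IsLat ((PP (k := k) 0).comap φ.toLinearMap) := by
  obtain ⟨n, hn⟩ := bounded_below hφ
  obtain ⟨m, hm⟩ := bounded_below (IsPPU_inv hφ)
  have hc := ((isPPU_iff φ).1 hφ).1
  refine ⟨?_, ⟨-n, ?_⟩, ⟨m, ?_⟩⟩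
  · intro v hv
    change φ (shift k V 1 v) ∈ PP (k := k) 0
    rw [hc]
    exact PP_anti (by norm_num) (shift_mem_PP 1 0 _ hv)
  · intro v hv
    have h1 := shift_mem_PP n _ _ hv
    rw [add_neg_cancel] at h1
    have h2 := shift_mem_PP (-n) _ _ (hn _ h1)
    rw [hc, shift_shift', neg_add_cancel, shift_zero'] at h2
    exact h2
  · intro v hv
    have := hm _ hv
    change φ⁻¹ (φ v) ∈ PP (k := k) m at this
    rwa [inv_self] at this

theorem exists_of_isLat [FiniteDimensional k V] (hsymm : ∀ v w : V, b v w = b w v)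
    (haniso : ∀ v : V, b v v = 0 → v = 0) {M : Submodule k (ℤ →₀ V)} (hM : IsLat M) :
    ∃ σ : (ℤ →₀ V) ≃ₗ[k] (ℤ →₀ V), IsPPU k V b σ ∧
      (PP (k := k) 0).comap σ.toLinearMap = M := by
  obtain ⟨n, hn⟩ := hM.lower
  let E : WW b M →ₗ[k] V := (ev (k := k) (V := V)).domRestrict (WW b M)
  have hE : ∀ w, E w = ev (k := k) (w : ℤ →₀ V) := fun w => rfl
  have hinj : Function.Injective E := by
    rw [injective_iff_map_eq_zero]
    intro w hw
    apply Subtype.ext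
    apply WW_aniso hsymm haniso hM w.2
    rw [WW_form hsymm hM w.2 w.2, ← hE, hw]
    simp
  have hsurj : Function.Surjective E := by
    intro x
    have hx : single n x ∈ M := hn fun i hi => Finsupp.single_eq_of_ne (by lia)
    obtain ⟨D, w, hw, he⟩ := WW_span hsymm haniso hM _ hx
    refine ⟨∑ i ∈ Finset.range D, ⟨w i, hw i⟩, ?_⟩
    have h2 := congrArg (ev (k := k)) he
    rw [ev_single, map_sum] at h2
    simp only [ev_shift] at h2
    rw [h2, map_sum]
    rfl
  let eW : WW b M ≃ₗ[k] V := LinearEquiv.ofBijective E ⟨hinj, hsurj⟩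
  let s : V →ₗ[k] (ℤ →₀ V) := (WW b M).subtype ∘ₗ eW.symm.toLinearMap
  have hsW : ∀ x, s x ∈ WW b M := fun x => (eW.symm x).2
  have hsev : ∀ x, ev (k := k) (s x) = x := fun x => eW.apply_symm_apply x
  have hevs : ∀ w ∈ WW b M, s (ev (k := k) w) = w := fun w hw =>
    congrArg Subtype.val (eW.symm_apply_apply ⟨w, hw⟩)
  let θ : (ℤ →₀ V) →ₗ[k] (ℤ →₀ V) := Finsupp.lsum k fun i : ℤ => (shift k V i).toLinearMap ∘ₗ s
  have hθ : ∀ i x, θ (single i x) = shift k V i (s x) := by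
    intro i x
    simp [θ]
  have hcomm : ∀ v, θ (shift k V 1 v) = shift k V 1 (θ v) := by
    intro v
    suffices h : θ ∘ₗ (shift k V 1).toLinearMap = (shift k V 1).toLinearMap ∘ₗ θ by
      exact LinearMap.congr_fun h v
    apply Finsupp.lhom_ext
    intro i x
    simp [shift_single', hθ, shift_shift']
  have hB : ∀ v w, B0 b (θ v) (θ w) = B0 b v w := by
    intro v w
    suffices h : (B0 b).compl₁₂ θ θ = B0 b by
      exact LinearMap.congr_fun₂ h v w
    apply Finsupp.lhom_ext
    intro i x
    apply Finsupp.lhom_ext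
    intro j y
    rw [LinearMap.compl₁₂_apply, hθ, hθ, B0_single]
    by_cases hij : i = j
    · subst hij
      rw [B0_shift, WW_form hsymm hM (hsW x) (hsW y), hsev, hsev]
      simp
    · rw [B0_symm b hsymm, B0_shift_left, shift_shift', B0_symm b hsymm,
        WW_orth hsymm hM (hsW x) (hsW y) _ (by lia), Finsupp.single_eq_of_ne (by lia)]
      simp
  have hev : ∀ v, ev (k := k) (θ v) = ev (k := k) v := by
    intro v
    suffices h : (ev (k := k) (V := V)) ∘ₗ θ = ev by
      exact LinearMap.congr_fun h v
    apply Finsupp.lhom_ext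
    intro i x
    simp [hθ, ev_shift, hsev, ev_single]
  have hθinj : Function.Injective θ := by
    rw [injective_iff_map_eq_zero]
    intro v hv
    ext i
    apply haniso
    have := hB v (single i (v i))
    rw [hv, B0_single] at this
    simpa using this.symm
  have hMθ : ∀ m ∈ M, ∃ u ∈ PP (k := k) (V := V) 0, θ u = m := by
    intro m hm
    obtain ⟨D, w, hw, rfl⟩ := WW_span hsymm haniso hM m hm
    refine ⟨∑ i ∈ Finset.range D, single (i : ℤ) (ev (k := k) (w i)), ?_, ?_⟩
    · apply Submodule.sum_mem
      intro i _ j hj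
      exact Finsupp.single_eq_of_ne (by lia)
    · rw [map_sum]
      exact Finset.sum_congr rfl fun i _ => by rw [hθ, hevs _ (hw i)]
  have hθM : PP 0 ≤ M.comap θ := by
    apply PP_le_of_single
    intro i x hi
    rw [Submodule.mem_comap, hθ]
    have := hM.stable' i.toNat _ (hsW x).1
    rwa [Int.toNat_of_nonneg hi] at this
  have hθsurj : Function.Surjective θ := by
    intro v
    obtain ⟨a, ha⟩ := v.support.bddBelow
    have hv : v ∈ PP (k := k) a := by
      intro i hi
      by_contra hc
      have : a ≤ i := ha (by simpa using hc)
      lia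
    have h1 := shift_mem_PP (n - a) a v hv
    rw [sub_add_cancel] at h1
    obtain ⟨u, -, hu⟩ := hMθ _ (hn h1)
    refine ⟨shift k V (-(n - a)) u, ?_⟩
    rw [comm_all θ hcomm, hu, shift_shift', neg_add_cancel, shift_zero']
  let Θ : (ℤ →₀ V) ≃ₗ[k] (ℤ →₀ V) := LinearEquiv.ofBijective θ ⟨hθinj, hθsurj⟩
  have hΘ : IsPPU k V b Θ := (isPPU_iff Θ).2 ⟨comm_all θ hcomm, hB, hev⟩
  refine ⟨Θ⁻¹, IsPPU_inv hΘ, ?_⟩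
  apply le_antisymm
  · intro v hv
    have : θ (Θ⁻¹ v) ∈ M := hθM hv
    have e : θ (Θ⁻¹ v) = v := self_inv Θ v
    rwa [e] at this
  · intro v hv
    obtain ⟨u, hu, rfl⟩ := hMθ v hv
    have e : Θ⁻¹ (θ u) = u := inv_self Θ u
    change Θ⁻¹ (θ u) ∈ PP (k := k) 0
    rwa [e]

end Helpers

/-- The right-invariant order `φ ≤ ψ :⟺ ψφ⁻¹ ∈ PPU(b)⁺` on `PPU(b)`
is a lattice order: any two elements of `PPU(b)` have a least upper bound and a
greatest lower bound within `PPU(b)`. -/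
theorem stmt6 [FiniteDimensional k V] (b : LinearMap.BilinForm k V)
    (hsymm : ∀ v w : V, b v w = b w v)
    (haniso : ∀ v : V, b v v = 0 → v = 0) :
    ∀ φ ψ : (ℤ →₀ V) ≃ₗ[k] (ℤ →₀ V), IsPPU k V b φ → IsPPU k V b ψ →
      (∃ σ, IsPPU k V b σ ∧ PPUpos k V b (σ * φ⁻¹) ∧ PPUpos k V b (σ * ψ⁻¹) ∧
        ∀ χ, IsPPU k V b χ → PPUpos k V b (χ * φ⁻¹) → PPUpos k V b (χ * ψ⁻¹) →
          PPUpos k V b (χ * σ⁻¹)) ∧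
      (∃ τ, IsPPU k V b τ ∧ PPUpos k V b (φ * τ⁻¹) ∧ PPUpos k V b (ψ * τ⁻¹) ∧
        ∀ χ, IsPPU k V b χ → PPUpos k V b (φ * χ⁻¹) → PPUpos k V b (ψ * χ⁻¹) →
          PPUpos k V b (τ * χ⁻¹)) := by
  intro φ ψ hφ hψ
  have hL := isLat_comap hφ
  have hL' := isLat_comap hψ
  constructor
  · obtain ⟨σ, hσ, e⟩ := exists_of_isLat hsymm haniso (hL.sup hL')
    refine ⟨σ, hσ, ?_, ?_, ?_⟩
    · rw [PPUpos_mul_inv_iff hφ hσ, e]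
      exact le_sup_left
    · rw [PPUpos_mul_inv_iff hψ hσ, e]
      exact le_sup_right
    · intro χ hχ h1 h2
      rw [PPUpos_mul_inv_iff hφ hχ] at h1
      rw [PPUpos_mul_inv_iff hψ hχ] at h2
      rw [PPUpos_mul_inv_iff hσ hχ, e]
      exact sup_le h1 h2
  · obtain ⟨τ, hτ, e⟩ := exists_of_isLat hsymm haniso (hL.inf hL')
    refine ⟨τ, hτ, ?_, ?_, ?_⟩
    · rw [PPUpos_mul_inv_iff hτ hφ, e]
      exact inf_le_left
    · rw [PPUpos_mul_inv_iff hτ hψ, e]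
      exact inf_le_right
    · intro χ hχ h1 h2
      rw [PPUpos_mul_inv_iff hχ hφ] at h1
      rw [PPUpos_mul_inv_iff hχ hψ] at h2
      rw [PPUpos_mul_inv_iff hχ hτ, e]
      exact le_inf h1 h2
end

section
/- The map Ω : PPU(b)⁻ → Sub(V⊕) is injective: if φ₁, φ₂ ∈ PPU(b)⁻ induce endomorphisms of V⊕ with equal kernels, then φ₁ = φ₂. -/
open Finsupp

variable (k : Type*) [Field k] (V : Type*) [AddCommGroup V] [Module k V]

/-- `V[t⁻¹] ⊆ V[t,t⁻¹]`: the elements with `vᵢ = 0` for `i > 0`. -/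
def Vneg : Submodule k (ℤ →₀ V) where
  carrier := {v | ∀ i : ℤ, 0 < i → v i = 0}
  add_mem' := by
    intro a c ha hc i hi
    simp only [Set.mem_setOf_eq] at *
    simp [Finsupp.add_apply, ha i hi, hc i hi]
  zero_mem' := by intro i _; rfl
  smul_mem' := by
    intro c x hx i hi
    simp only [Set.mem_setOf_eq] at *
    simp [Finsupp.smul_apply, hx i hi]

theorem aux_shift_single (n m : ℤ) (x : V) :
    shift k V n (Finsupp.single m x) = Finsupp.single (m + n) x := by
  simp [shift, Finsupp.domLCongr_apply, Finsupp.domCongr_apply]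

theorem aux_sum_shift (n : ℤ) (v : ℤ →₀ V) :
    (Finsupp.lsum k fun _ : ℤ => (LinearMap.id : V →ₗ[k] V)) (shift k V n v) =
    (Finsupp.lsum k fun _ : ℤ => (LinearMap.id : V →ₗ[k] V)) v := by
  induction v using Finsupp.induction_linear with
  | zero => simp
  | add f g hf hg => rw [map_add, map_add, hf, hg, map_add]
  | single m x => rw [aux_shift_single]; simp

theorem aux_comm (T : (ℤ →₀ V) ≃ₗ[k] (ℤ →₀ V))
    (hT : ∀ v, T (shift k V 1 v) = shift k V 1 (T v)) (n : ℤ) (x : V) :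
    ∃ s : (ℤ →₀ V) →ₗ[k] (ℤ →₀ V), T (Finsupp.single n x) = s (T (Finsupp.single 0 x)) ∧
      s = (shift k V n : (ℤ →₀ V) →ₗ[k] (ℤ →₀ V)) := by
  refine ⟨_, ?_, rfl⟩
  have hadd : ∀ (p q : ℤ) (v : ℤ →₀ V), shift k V p (shift k V q v) = shift k V (q + p) v := by
    intro p q v
    induction v using Finsupp.induction_linear with
    | zero => simp
    | add f g hf hg => simp only [map_add, hf, hg]
    | single m x => simp only [aux_shift_single, add_assoc]
  have h0 : ∀ v, shift k V 0 v = v := by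
    intro v
    induction v using Finsupp.induction_linear with
    | zero => simp
    | add f g hf hg => simp only [map_add, hf, hg]
    | single m x => simp only [aux_shift_single, add_zero]
  show _ = shift k V n _
  induction n using Int.induction_on with
  | zero => rw [h0]
  | succ i ih => rw [← aux_shift_single k, hT, ih, hadd]
  | pred i ih =>
    apply (shift k V 1).injective
    rw [← hT, aux_shift_single, hadd, sub_add_cancel, ih]

theorem aux_sum (T : (ℤ →₀ V) ≃ₗ[k] (ℤ →₀ V))
    (hT : ∀ v, T (shift k V 1 v) = shift k V 1 (T v))
    (he : eps k V (T : (ℤ →₀ V) →ₗ[k] (ℤ →₀ V)) = LinearMap.id) (v : ℤ →₀ V) :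
    (Finsupp.lsum k fun _ : ℤ => (LinearMap.id : V →ₗ[k] V)) (T v) =
    (Finsupp.lsum k fun _ : ℤ => (LinearMap.id : V →ₗ[k] V)) v := by
  induction v using Finsupp.induction_linear with
  | zero => simp
  | add f g hf hg => simp only [map_add, hf, hg]
  | single m x =>
    obtain ⟨s, h1, rfl⟩ := aux_comm k V T hT m x
    have h2 := LinearMap.congr_fun he x
    have h3 : (Finsupp.lsum k fun _ : ℤ => (LinearMap.id : V →ₗ[k] V))
      (T (Finsupp.single 0 x)) = x := h2
    rw [h1]
    refine (aux_sum_shift k V m _).trans ?_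
    rw [h3]; simp

/-- `Ω : PPU(b)⁻ → Sub(V⊕)` is injective: elements of `PPU(b)⁻`
inducing endomorphisms of `V⊕` with the same kernel are equal. -/
theorem stmt13 [FiniteDimensional k V] (b : LinearMap.BilinForm k V)
    (hsymm : ∀ v w : V, b v w = b w v)
    (haniso : ∀ v : V, b v v = 0 → v = 0)
    (φ ψ : (ℤ →₀ V) ≃ₗ[k] (ℤ →₀ V)) (hφ : PPUneg k V b φ) (hψ : PPUneg k V b ψ)
    (h : ∀ v : ℤ →₀ V, φ v ∈ Vneg k V ↔ ψ v ∈ Vneg k V) :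
    φ = ψ := by
  obtain ⟨⟨⟨hφt, hφb⟩, hφe⟩, -⟩ := hφ
  obtain ⟨⟨⟨hψt, hψb⟩, hψe⟩, -⟩ := hψ
  have hneg : ∀ y : V, Finsupp.single 0 y ∈ Vneg k V := by
    intro y i hi
    exact Finsupp.single_eq_of_ne (by omega)
  -- key: ψ (φ⁻¹ x) = x for constant x
  have key : ∀ x : V, ψ (φ.symm (Finsupp.single 0 x)) = Finsupp.single 0 x := by
    intro x
    set u := ψ (φ.symm (Finsupp.single 0 x)) with hu
    have hpos : u ∈ Vneg k V := by
      rw [hu, ← h, LinearEquiv.apply_symm_apply]; exact hneg x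
    have hlow : ∀ n : ℤ, 0 < n → u (-n) = 0 := by
      intro n hn
      apply haniso
      set y := u (-n) with hy
      have e1 : Btilde k V b n u (Finsupp.single 0 y) = b y y := by
        simp [Btilde, hy]
      have e2 : Btilde k V b n u (Finsupp.single 0 y) = 
          Btilde k V b n (Finsupp.single 0 x) (φ (ψ.symm (Finsupp.single 0 y))) := by
        conv_rhs => rw [← LinearEquiv.apply_symm_apply φ (Finsupp.single 0 x), hφb, ← hψb,
          LinearEquiv.apply_symm_apply ψ]
      have hv : φ (ψ.symm (Finsupp.single 0 y)) ∈ Vneg k V := by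
        rw [h, LinearEquiv.apply_symm_apply]; exact hneg y
      rw [← e1, e2]
      unfold Btilde
      apply Finset.sum_eq_zero
      intro i _
      by_cases hi : i = n
      · subst hi
        simp only [hv i hn, map_zero]
      · beta_reduce
        rw [Finsupp.single_eq_of_ne (by omega)]; simp
    have hc : u = Finsupp.single 0 (u 0) := by
      ext i
      rcases lt_trichotomy i 0 with hi | hi | hi
      · rw [Finsupp.single_eq_of_ne (by omega)]
        simpa using hlow (-i) (by omega)
      · subst hi; simp
      · rw [Finsupp.single_eq_of_ne (by omega)]; exact hpos i hi
    have hs := aux_sum k V ψ hψt hψe (φ.symm (Finsupp.single 0 x))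
    rw [← aux_sum k V φ hφt hφe (φ.symm (Finsupp.single 0 x)),
      LinearEquiv.apply_symm_apply, ← hu, hc] at hs
    simp at hs
    rw [hc, hs]
  have hcs : ∀ T : (ℤ →₀ V) ≃ₗ[k] (ℤ →₀ V),
      (∀ v, T (shift k V 1 v) = shift k V 1 (T v)) →
      ∀ v, T.symm (shift k V 1 v) = shift k V 1 (T.symm v) := by
    intro T hT v
    apply T.injective
    rw [hT, LinearEquiv.apply_symm_apply, LinearEquiv.apply_symm_apply]
  have key2 : ∀ x : V, φ.symm (Finsupp.single 0 x) = ψ.symm (Finsupp.single 0 x) := by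
    intro x
    apply ψ.injective
    rw [key, LinearEquiv.apply_symm_apply]
  have key3 : ∀ v, φ.symm v = ψ.symm v := by
    intro v
    induction v using Finsupp.induction_linear with
    | zero => simp
    | add f g hf hg => simp only [map_add, hf, hg]
    | single m x =>
      obtain ⟨s, h1, rfl⟩ := aux_comm k V φ.symm (hcs φ hφt) m x
      obtain ⟨s, h2, rfl⟩ := aux_comm k V ψ.symm (hcs ψ hψt) m x
      rw [h1, h2, key2]
  apply LinearEquiv.ext
  intro v
  apply φ.symm.injective
  rw [LinearEquiv.symm_apply_apply, key3, LinearEquiv.symm_apply_apply]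
end
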